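/- arXiv:1602.08643 — 2 statements merged into one kernel-verified Lean document; each statement's English description precedes it below -/
import Mathlib

section
/- For every σ ∈ ℝ the functions Ψ and Φ are differentiable at σ and satisfy 1/κ₂ ≤ Ψ'(σ) ≤ 1/κ₁ and 1/ς₂ − 1/κ₁ ≤ Φ'(σ) ≤ 1/ς₁ − 1/κ₂; in particular |Φ'(σ)| is bounded uniformly in σ. -/
/-!
`Psi f` is the mean of the probability measure with density proportional to `exp (-f y + σ y)`, so
its derivative in `σ` is the variance of that measure. Write `m` for the mean and
`V y = f y - σ y`. Integrating the derivative of `(y - m) exp (-V y)` over the line gives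
`E[(Y - m) V'(Y)] = 1`, and subtracting the constant `V'(m)` from `V'(Y)` does not change the
expectation because `E[Y - m] = 0`. If `k₁ ≤ f'' ≤ k₂`, the mean value theorem places
`(y - m) (V'(y) - V'(m))` between `k₁ (y - m)²` and `k₂ (y - m)²`; hence
`k₁ Var ≤ 1 ≤ k₂ Var` (`Psi_deriv_bounds`). The bounds for `Φ` follow by subtracting those for `ψ`
from those for `ψ + P`.

Strong convexity gives Gaussian decay of the weight (`integrable_exp_tilt`), which justifies the
differentiation under the integral sign (`moment_facts`) and the integration by parts.
-/

noncomputable section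

open MeasureTheory Real

/-- `Ψ(σ) = (∫ y exp(-f(y)+σy) dy) / (∫ exp(-f(y)+σy) dy)`. -/
def Psi (f : ℝ → ℝ) (σ : ℝ) : ℝ :=
  (∫ y : ℝ, y * Real.exp (-f y + σ * y)) / (∫ y : ℝ, Real.exp (-f y + σ * y))

/-- Mean value theorem between `a` and `y`, in either order. Of the intermediate point
`a + t * (y - a)`, only the sign of `t` is recorded. -/
lemma exists_mvt_segment {g g' : ℝ → ℝ} (hg : ∀ x, HasDerivAt g (g' x) x) (a y : ℝ) :
    ∃ t : ℝ, 0 < t ∧ g y - g a = g' (a + t * (y - a)) * (y - a) := by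
  have hd : ∀ t : ℝ, HasDerivAt (fun t => g (a + t * (y - a)))
      (g' (a + t * (y - a)) * (y - a)) t := by
    intro t
    have h1 : HasDerivAt (fun t : ℝ => a + t * (y - a)) (y - a) t := by
      simpa using ((hasDerivAt_id t).mul_const (y - a)).const_add a
    exact (hg _).comp t h1
  obtain ⟨t, ht, h⟩ := exists_hasDerivAt_eq_slope (fun t => g (a + t * (y - a)))
    (fun t => g' (a + t * (y - a)) * (y - a)) zero_lt_one
    (fun t _ => (hd t).continuousAt.continuousWithinAt) (fun t _ => hd t)
  refine ⟨t, ht.1, ?_⟩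
  simp at h
  linarith

/-- Two-sided monotonicity of `f'` from two-sided bounds on `f''`. -/
lemma deriv_slope_bounds {f : ℝ → ℝ} {k₁ k₂ : ℝ} (hf : ContDiff ℝ 2 f)
    (hb : ∀ y, k₁ ≤ deriv (deriv f) y ∧ deriv (deriv f) y ≤ k₂) (a y : ℝ) :
    k₁ * (y - a) ^ 2 ≤ (y - a) * (deriv f y - deriv f a) ∧
      (y - a) * (deriv f y - deriv f a) ≤ k₂ * (y - a) ^ 2 := by
  have hd : Differentiable ℝ (deriv f) :=
    ((contDiff_succ_iff_deriv (n := 1)).1 hf).2.2.differentiable one_ne_zero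
  obtain ⟨t, -, h⟩ := exists_mvt_segment (fun x => (hd x).hasDerivAt) a y
  have hc := hb (a + t * (y - a))
  rw [h]
  constructor <;> nlinarith [sq_nonneg (y - a)]

/-- A strongly convex function lies above a parabola. -/
lemma quadratic_lower_bound {f : ℝ → ℝ} {k₁ k₂ : ℝ} (hf : ContDiff ℝ 2 f)
    (hb : ∀ y, k₁ ≤ deriv (deriv f) y ∧ deriv (deriv f) y ≤ k₂) (y : ℝ) :
    f 0 + deriv f 0 * y + k₁ / 2 * y ^ 2 ≤ f y := by
  have hd : Differentiable ℝ f := hf.differentiable two_ne_zero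
  have hg : ∀ x, HasDerivAt (fun x => f x - k₁ / 2 * x ^ 2) (deriv f x - k₁ * x) x := by
    intro x
    refine ((hd x).hasDerivAt.sub ((hasDerivAt_pow 2 x).const_mul (k₁ / 2))).congr_deriv ?_
    push_cast
    ring
  obtain ⟨t, ht, h⟩ := exists_mvt_segment hg 0 y
  have hs := (deriv_slope_bounds hf hb 0 (t * y)).1
  simp only [sub_zero, zero_add] at h hs
  have h2 : 0 ≤ t * ((deriv f (t * y) - k₁ * (t * y) - deriv f 0) * y) := by
    linarith
  have h3 := nonneg_of_mul_nonneg_right h2 ht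
  linarith

lemma integrable_exp_tilt {f : ℝ → ℝ} {k₁ k₂ : ℝ} (hf : ContDiff ℝ 2 f) (hk : 0 < k₁)
    (hb : ∀ y, k₁ ≤ deriv (deriv f) y ∧ deriv (deriv f) y ≤ k₂) (σ : ℝ) :
    Integrable (fun y => Real.exp (-f y + σ * y)) := by
  have hfc := hf.continuous
  have hG := (integrable_exp_neg_mul_sq (b := k₁ / 4) (by positivity)).const_mul
    (Real.exp (-f 0 + (σ - deriv f 0) ^ 2 / k₁))
  refine hG.mono' (by fun_prop) (ae_of_all _ fun y => ?_)
  rw [Real.norm_eq_abs, abs_of_pos (Real.exp_pos _), ← Real.exp_add, Real.exp_le_exp]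
  have h1 := quadratic_lower_bound hf hb y
  -- Completing the square absorbs the linear term into half of the quadratic one.
  have h2 : (σ - deriv f 0) * y ≤ k₁ / 4 * y ^ 2 + (σ - deriv f 0) ^ 2 / k₁ := by
    have : k₁ / 4 * y ^ 2 + (σ - deriv f 0) ^ 2 / k₁ - (σ - deriv f 0) * y
        = (k₁ * y / 2 - (σ - deriv f 0)) ^ 2 / k₁ := by
      field_simp
      ring
    have h3 : 0 ≤ (k₁ * y / 2 - (σ - deriv f 0)) ^ 2 / k₁ := by positivity
    linarith
  linarith

/-- All moments of the tilted weights are finite, and differentiating a moment in the tilt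
parameter raises its order by one. This is the Mathlib theory of moment generating functions applied
to the identity under the measure with density `exp (-f)`. -/
lemma moment_facts {f : ℝ → ℝ} (hfc : Continuous f)
    (hint : ∀ σ : ℝ, Integrable (fun y => Real.exp (-f y + σ * y))) (n : ℕ) (σ : ℝ) :
    Integrable (fun y => y ^ n * Real.exp (-f y + σ * y)) ∧
    HasDerivAt (fun σ => ∫ y, y ^ n * Real.exp (-f y + σ * y))
      (∫ y, y ^ (n + 1) * Real.exp (-f y + σ * y)) σ := by
  have hm : Measurable fun y => ENNReal.ofReal (Real.exp (-f y)) := by fun_prop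
  have hlt : ∀ᵐ y : ℝ, ENNReal.ofReal (Real.exp (-f y)) < ⊤ := by simp
  set μ : Measure ℝ := volume.withDensity fun y => ENNReal.ofReal (Real.exp (-f y)) with hμ
  have key : ∀ (n : ℕ) (σ y : ℝ), (ENNReal.ofReal (Real.exp (-f y))).toReal •
      (y ^ n * Real.exp (σ * y)) = y ^ n * Real.exp (-f y + σ * y) := by
    intro n σ y
    rw [ENNReal.toReal_ofReal (Real.exp_pos _).le, Real.exp_add, smul_eq_mul]
    ring
  have hset : ProbabilityTheory.integrableExpSet id μ = Set.univ := by
    refine Set.eq_univ_of_forall fun τ => ?_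
    change Integrable (fun y => Real.exp (τ * y)) μ
    rw [hμ, integrable_withDensity_iff_integrable_smul' hm hlt]
    have := hint τ
    simpa using (this.congr (ae_of_all _ fun y => by simpa using (key 0 τ y).symm))
  have hmem : σ ∈ interior (ProbabilityTheory.integrableExpSet id μ) := by simp [hset]
  have hI : ∀ (n : ℕ) (σ : ℝ), ∫ y, id y ^ n * Real.exp (σ * id y) ∂μ
      = ∫ y, y ^ n * Real.exp (-f y + σ * y) := by
    intro n σ
    rw [hμ, integral_withDensity_eq_integral_toReal_smul hm hlt]
    exact integral_congr_ae (ae_of_all _ fun y => key n σ y)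
  constructor
  · have h := ProbabilityTheory.integrable_pow_mul_exp_of_mem_interior_integrableExpSet hmem n
    rw [hμ, integrable_withDensity_iff_integrable_smul' hm hlt] at h
    exact h.congr (ae_of_all _ fun y => key n σ y)
  · have h := ProbabilityTheory.hasDerivAt_integral_pow_mul_exp_real hmem n
    simpa only [hI] using h

/-- The derivative of `Psi f` is the variance of the tilted measure, pinched between the inverses
of the bounds on `f''`. -/
lemma Psi_deriv_bounds {f : ℝ → ℝ} {k₁ k₂ : ℝ} (hf : ContDiff ℝ 2 f) (hk : 0 < k₁)
    (hkk : k₁ ≤ k₂) (hb : ∀ y, k₁ ≤ deriv (deriv f) y ∧ deriv (deriv f) y ≤ k₂) (σ : ℝ) :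
    DifferentiableAt ℝ (Psi f) σ ∧ 1 / k₂ ≤ deriv (Psi f) σ ∧ deriv (Psi f) σ ≤ 1 / k₁ := by
  have hint := integrable_exp_tilt hf hk hb
  have hM := moment_facts hf.continuous hint
  have i0 := hint σ
  have i1 := (hM 1 σ).1
  have i2 := (hM 2 σ).1
  have d0 := (hM 0 σ).2
  have d1 := (hM 1 σ).2
  simp only [pow_zero, one_mul, zero_add, pow_one, one_add_one_eq_two] at i1 d0 d1
  set A := ∫ y, Real.exp (-f y + σ * y) with hA
  set B := ∫ y, y * Real.exp (-f y + σ * y) with hB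
  set C := ∫ y, y ^ 2 * Real.exp (-f y + σ * y) with hC
  have hApos : 0 < A := integral_exp_pos i0
  have hD : HasDerivAt (Psi f) ((C * A - B * B) / A ^ 2) σ := d1.div d0 hApos.ne'
  set m := B / A with hm
  set c := deriv f m - σ with hc
  have hmA : m * A = B := by rw [hm]; field_simp
  -- The integrand obtained from the integration by parts below, with `(y - m) * (f' y - f' m)`
  -- replaced by `k * (y - m) ^ 2`; its linear term integrates to zero because `m` is the mean.
  have hQ : ∀ k : ℝ, Integrable (fun y => (1 - k * (y - m) ^ 2 - c * (y - m)) *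
        Real.exp (-f y + σ * y)) ∧
      ∫ y, (1 - k * (y - m) ^ 2 - c * (y - m)) * Real.exp (-f y + σ * y)
        = A - k * (C - m * B) := by
    intro k
    have e : (fun y => (1 - k * (y - m) ^ 2 - c * (y - m)) * Real.exp (-f y + σ * y))
        = fun y => (1 - k * m ^ 2 + c * m) * Real.exp (-f y + σ * y) +
          (2 * k * m - c) * (y * Real.exp (-f y + σ * y)) +
          (-k) * (y ^ 2 * Real.exp (-f y + σ * y)) := by
      funext y
      ring
    have j0 := i0.const_mul (1 - k * m ^ 2 + c * m)
    have j1 := i1.const_mul (2 * k * m - c)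
    have j2 := i2.const_mul (-k)
    have j01 : Integrable fun y => (1 - k * m ^ 2 + c * m) * Real.exp (-f y + σ * y) +
        (2 * k * m - c) * (y * Real.exp (-f y + σ * y)) := j0.add j1
    rw [e]
    refine ⟨j01.add j2, ?_⟩
    rw [integral_add j01 j2, integral_add j0 j1, integral_const_mul, integral_const_mul,
      integral_const_mul, ← hA, ← hB, ← hC, ← hmA]
    ring
  have hfd : Differentiable ℝ f := hf.differentiable two_ne_zero
  have hfc' : Continuous (deriv f) := hf.continuous_deriv one_le_two
  have hfc := hf.continuous
  have hder : ∀ y, HasDerivAt (fun y => (y - m) * Real.exp (-f y + σ * y))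
      ((1 - (y - m) * (deriv f y - σ)) * Real.exp (-f y + σ * y)) y := by
    intro y
    have h1 : HasDerivAt (fun y => -f y + σ * y) (-deriv f y + σ) y := by
      refine ((hfd y).hasDerivAt.neg.add ((hasDerivAt_id y).const_mul σ)).congr_deriv ?_
      ring
    refine (((hasDerivAt_id y).sub_const m).mul h1.exp).congr_deriv ?_
    simp only [id]
    ring
  have hpt : ∀ y, (1 - k₂ * (y - m) ^ 2 - c * (y - m)) * Real.exp (-f y + σ * y)
        ≤ (1 - (y - m) * (deriv f y - σ)) * Real.exp (-f y + σ * y) ∧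
      (1 - (y - m) * (deriv f y - σ)) * Real.exp (-f y + σ * y)
        ≤ (1 - k₁ * (y - m) ^ 2 - c * (y - m)) * Real.exp (-f y + σ * y) := by
    intro y
    have hs := deriv_slope_bounds hf hb m y
    constructor <;>
    · refine mul_le_mul_of_nonneg_right ?_ (Real.exp_pos _).le
      rw [hc]
      linarith [hs.1, hs.2]
  have hF' : Integrable fun y => (1 - (y - m) * (deriv f y - σ)) * Real.exp (-f y + σ * y) :=
    integrable_of_le_of_le (by fun_prop) (ae_of_all _ fun y => (hpt y).1)
      (ae_of_all _ fun y => (hpt y).2) (hQ k₂).1 (hQ k₁).1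
  have hF : Integrable fun y => (y - m) * Real.exp (-f y + σ * y) := by
    refine (i1.sub (i0.const_mul m)).congr (ae_of_all _ fun y => ?_)
    simp only [Pi.sub_apply]
    ring
  have hzero := integral_eq_zero_of_hasDerivAt_of_integrable hder hF' hF
  have hup := integral_mono hF' (hQ k₁).1 fun y => (hpt y).2
  have hlo := integral_mono (hQ k₂).1 hF' fun y => (hpt y).1
  rw [hzero, (hQ k₁).2] at hup
  rw [hzero, (hQ k₂).2] at hlo
  have hval : (C * A - B * B) / A ^ 2 = (C - m * B) / A := by
    rw [hm]
    field_simp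
  refine ⟨hD.differentiableAt, ?_, ?_⟩
  · rw [hD.deriv, hval, div_le_div_iff₀ (hk.trans_le hkk) hApos]
    linarith
  · rw [hD.deriv, hval, div_le_div_iff₀ hApos hk]
    linarith

/-- bounds on the derivatives of `Ψ` and `Φ = Ψ_{ψ+P} - Ψ_ψ`. -/
theorem derivative_bounds_Psi_Phi
    (ψ P : ℝ → ℝ) (κ₁ κ₂ ς₁ ς₂ : ℝ)
    (hψ : ContDiff ℝ 2 ψ) (hP : ContDiff ℝ 2 P)
    (hκ₁ : 0 < κ₁) (hκ : κ₁ ≤ κ₂) (hς₁ : 0 < ς₁) (hς : ς₁ ≤ ς₂)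
    (hψ'' : ∀ y : ℝ, κ₁ ≤ deriv (deriv ψ) y ∧ deriv (deriv ψ) y ≤ κ₂)
    (hψP'' : ∀ y : ℝ, ς₁ ≤ deriv (deriv (fun z => ψ z + P z)) y ∧
        deriv (deriv (fun z => ψ z + P z)) y ≤ ς₂) :
    ∀ σ : ℝ,
      DifferentiableAt ℝ (Psi ψ) σ ∧
      1 / κ₂ ≤ deriv (Psi ψ) σ ∧ deriv (Psi ψ) σ ≤ 1 / κ₁ ∧
      DifferentiableAt ℝ (fun τ => Psi (fun z => ψ z + P z) τ - Psi ψ τ) σ ∧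
      1 / ς₂ - 1 / κ₁ ≤ deriv (fun τ => Psi (fun z => ψ z + P z) τ - Psi ψ τ) σ ∧
      deriv (fun τ => Psi (fun z => ψ z + P z) τ - Psi ψ τ) σ ≤ 1 / ς₁ - 1 / κ₂ := by
  intro σ
  obtain ⟨h1, h2, h3⟩ := Psi_deriv_bounds hψ hκ₁ hκ hψ'' σ
  obtain ⟨g1, g2, g3⟩ := Psi_deriv_bounds (hψ.add hP) hς₁ hς hψP'' σ
  have hsub : deriv (fun τ => Psi (fun z => ψ z + P z) τ - Psi ψ τ) σ
      = deriv (Psi (fun z => ψ z + P z)) σ - deriv (Psi ψ) σ := deriv_fun_sub g1 h1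
  refine ⟨h1, h2, h3, g1.sub h1, ?_, ?_⟩ <;> rw [hsub] <;> linarith
end
end

section
/- For every A ∈ ℝ there is a constant C > 0 such that for all sufficiently large N, | N·[W_N^P(A) − W(A)] + log( (∫_ℝ exp(−(ψ+P)(y) + W'(A)·y) dy) / (∫_ℝ exp(−ψ(y) + W'(A)·y) dy) ) | ≤ C/N; in particular lim_{N→∞} N·[W_N^P(A) − W(A)] = −log( (∫_ℝ exp(−(ψ+P)(y) + W'(A)·y) dy) / (∫_ℝ exp(−ψ(y) + W'(A)·y) dy) ). -/
/-!
Write `F = logZ ψ` and `G = logZ (ψ + P)`, where `logZ φ σ = log ∫ exp (-φ(y) + σ y) dy`. These are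
cumulant generating functions of finite measures with Gaussian tails, hence analytic and convex, and
`F''` is a variance, hence positive. Restricting the integral to unit intervals shows that
`F(σ) - σ A` is coercive, so it has a minimizer `σ₀`, and `W(A) = σ₀ A - F(σ₀)`.

Let `h(σ) = F(σ) - σ A + W(A) ≥ 0` be the excess. Since `F''(σ₀) > 0` and `h` is convex, `h` is
quadratic near `σ₀` and at least linear away from it, so that
`sup_σ [(σ - σ₀) x - h(σ)] ≤ K x²` for all small `x` (`exists_maximizer`). This estimate is
used twice.

* With `x = B - A` it gives `0 ≤ W(B) - W(A) - σ₀ (B - A) ≤ K (B - A)²`, so `W'(A) = σ₀`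
  (`W_eq_and_hasDerivAt`).
* Moreover `N [W_N^P(A) - W(A)] + G(σ₀) - F(σ₀)` is the supremum over
  `σ` of `-(N - 1) h(σ) - (G(σ) - G(σ₀)) + (σ - σ₀) A`.
  Taking `σ = σ₀` shows that this is nonnegative. By convexity of `G`, the expression is at most
  `(N - 1) [(σ - σ₀) x - h(σ)]` with `x = (A - G'(σ₀)) / (N - 1)`, hence at most
  `K (A - G'(σ₀))² / (N - 1)`.
-/

noncomputable section

open MeasureTheory Real Filter

/-- The Cauchy–Born strain energy `W(A)`. -/
def W (ψ : ℝ → ℝ) (A : ℝ) : ℝ :=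
  ⨆ σ : ℝ, (σ * A - Real.log (∫ y : ℝ, Real.exp (-ψ y + σ * y)))

/-- `W_N^P(A)`, the analogue of `W` for the defect material. -/
def WNP (ψ P : ℝ → ℝ) (N : ℕ) (A : ℝ) : ℝ :=
  ⨆ σ : ℝ, (σ * A - (N : ℝ)⁻¹ *
    (Real.log (∫ y : ℝ, Real.exp (-(ψ y + P y) + σ * y)) +
     ((N : ℝ) - 1) * Real.log (∫ y : ℝ, Real.exp (-ψ y + σ * y))))

/-! ### Convex functions on the line -/

lemma ConvexOn.tangent_le {f : ℝ → ℝ} (hf : ConvexOn ℝ Set.univ f) {x m : ℝ}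
    (hd : HasDerivAt f m x) (y : ℝ) : f x + m * (y - x) ≤ f y := by
  rcases lt_trichotomy x y with h | h | h
  · have := hf.le_slope_of_hasDerivAt (Set.mem_univ x) (Set.mem_univ y) h hd
    rw [slope_def_field, le_div_iff₀ (by linarith)] at this
    linarith
  · simp [h]
  · have := hf.slope_le_of_hasDerivAt (Set.mem_univ y) (Set.mem_univ x) h hd
    rw [slope_def_field, div_le_iff₀ (by linarith)] at this
    linarith

/-- A convex function `g` with `g 0 = 0` which dominates `c t²` near `0` grows at least linearly away
from `0`, so its Legendre transform is at most `x² / (4c)` for small `x`. -/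
lemma legendre_le_of_quadratic_growth {g : ℝ → ℝ} (hg : ConvexOn ℝ Set.univ g) (h0 : g 0 = 0)
    {c δ : ℝ} (hc : 0 < c) (hδ : 0 < δ) (hloc : ∀ t, |t| ≤ δ → c * t ^ 2 ≤ g t)
    {x : ℝ} (hx : |x| ≤ c * δ) (t : ℝ) : t * x - g t ≤ x ^ 2 / (4 * c) := by
  rcases le_or_gt |t| δ with ht | ht
  · have h1 := hloc t ht
    rw [le_div_iff₀ (by positivity)]
    nlinarith [sq_nonneg (x - 2 * c * t)]
  · have htpos : 0 < |t| := hδ.trans ht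
    -- compare with the point `(δ / |t|) t`, which lies on the boundary of the local region
    have h1 := hg.2 (Set.mem_univ t) (Set.mem_univ (0 : ℝ)) (by positivity : 0 ≤ δ / |t|)
      (by rw [sub_nonneg, div_le_one htpos]; exact ht.le : 0 ≤ 1 - δ / |t|) (by ring)
    have habs : |δ / |t| * t| = δ := by
      rw [abs_mul, abs_of_pos (by positivity : 0 < δ / |t|)]
      field_simp
    have h2 := hloc (δ / |t| * t) habs.le
    rw [← sq_abs, habs] at h2
    simp only [smul_eq_mul, mul_zero, add_zero, h0] at h1
    have h3 : c * δ ^ 2 ≤ δ / |t| * g t := h2.trans h1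
    have h4 : c * δ * |t| ≤ g t := by
      have h5 : δ / |t| * g t = δ * g t / |t| := by ring
      rw [h5, le_div_iff₀ htpos] at h3
      nlinarith
    have h5 : t * x ≤ |t| * |x| := by rw [← abs_mul]; exact le_abs_self _
    have h6 : |t| * |x| ≤ |t| * (c * δ) := by gcongr
    have : 0 ≤ x ^ 2 / (4 * c) := by positivity
    nlinarith

/-! ### The log-partition function of a uniformly convex potential -/

/-- `logZ φ σ = log ∫ exp (-φ(y) + σ y) dy`. -/
def logZ (φ : ℝ → ℝ) (σ : ℝ) : ℝ := Real.log (∫ y : ℝ, Real.exp (-φ y + σ * y))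

/-- The unnormalized Gibbs measure `exp (-φ(y)) dy`. -/
def gibbs (φ : ℝ → ℝ) : Measure ℝ :=
  (volume : Measure ℝ).withDensity fun y => (Real.toNNReal (Real.exp (-φ y)) : ENNReal)

section Potential

variable {φ : ℝ → ℝ} {κ : ℝ}

lemma quadratic_le (hφ : ContDiff ℝ 2 φ) (hcvx : ∀ y, κ ≤ deriv (deriv φ) y) (y : ℝ) :
    φ 0 + deriv φ 0 * y + κ / 2 * y ^ 2 ≤ φ y := by
  have hd : Differentiable ℝ φ := hφ.differentiable (by norm_num)
  have hd' : Differentiable ℝ (deriv φ) := by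
    have : ContDiff ℝ 1 (deriv φ) := hφ.deriv'
    exact this.differentiable (by norm_num)
  have e1 : ∀ z, HasDerivAt (fun z => φ z - κ / 2 * z ^ 2) (deriv φ z - κ * z) z := by
    intro z
    refine ((hd z).hasDerivAt.sub (((hasDerivAt_id z).pow 2).const_mul (κ / 2))).congr_deriv ?_
    simp; ring
  have e2 : ∀ z, HasDerivAt (fun z => deriv φ z - κ * z) (deriv (deriv φ) z - κ) z := by
    intro z
    refine ((hd' z).hasDerivAt.sub ((hasDerivAt_id z).const_mul κ)).congr_deriv ?_
    simp
  have e3 : deriv (fun z => φ z - κ / 2 * z ^ 2) = fun z => deriv φ z - κ * z :=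
    funext fun z => (e1 z).deriv
  have hconv : ConvexOn ℝ Set.univ (fun z => φ z - κ / 2 * z ^ 2) := by
    refine convexOn_univ_of_deriv2_nonneg (fun z => (e1 z).differentiableAt) ?_ ?_
    · rw [e3]; exact fun z => (e2 z).differentiableAt
    · intro z
      simp only [Function.iterate_succ, Function.iterate_zero, Function.comp, id]
      rw [e3, (e2 z).deriv]
      linarith [hcvx z]
  have := hconv.tangent_le (e1 0) y
  simp at this
  linarith

lemma integrable_gibbs_weight (hκ : 0 < κ) (hφ : ContDiff ℝ 2 φ)
    (hcvx : ∀ y, κ ≤ deriv (deriv φ) y) (σ : ℝ) :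
    Integrable (fun y : ℝ => Real.exp (-φ y + σ * y)) := by
  have hc := hφ.continuous
  set b := σ - deriv φ 0 with hb
  refine ((integrable_exp_neg_mul_sq (b := κ / 4) (by positivity)).const_mul
    (Real.exp (-φ 0 + b ^ 2 / κ))).mono' (by fun_prop) (Eventually.of_forall fun y => ?_)
  rw [Real.norm_eq_abs, abs_of_pos (Real.exp_pos _), ← Real.exp_add, Real.exp_le_exp]
  have h1 := quadratic_le hφ hcvx y
  -- Young's inequality absorbs the linear term into half of the quadratic one
  have h2 : b * y ≤ b ^ 2 / κ + κ / 4 * y ^ 2 := by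
    have : b ^ 2 / κ + κ / 4 * y ^ 2 - b * y = (b - κ / 2 * y) ^ 2 / κ := by
      field_simp; ring
    have : 0 ≤ (b - κ / 2 * y) ^ 2 / κ := by positivity
    linarith
  have h3 : σ * y = b * y + deriv φ 0 * y := by rw [hb]; ring
  nlinarith

lemma integral_gibbs (hc : Continuous φ) (g : ℝ → ℝ) :
    ∫ y, g y ∂(gibbs φ) = ∫ y, Real.exp (-φ y) * g y := by
  rw [gibbs, integral_withDensity_eq_integral_smul (by fun_prop)]
  simp [NNReal.smul_def, (Real.exp_pos _).le]

lemma integrable_gibbs_iff (hc : Continuous φ) (g : ℝ → ℝ) :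
    Integrable g (gibbs φ) ↔ Integrable (fun y => Real.exp (-φ y) * g y) := by
  rw [gibbs, integrable_withDensity_iff_integrable_smul (by fun_prop)]
  simp [NNReal.smul_def, (Real.exp_pos _).le]

lemma logZ_eq_cgf (hc : Continuous φ) : logZ φ = ProbabilityTheory.cgf id (gibbs φ) := by
  ext σ
  simp [logZ, ProbabilityTheory.cgf, ProbabilityTheory.mgf, integral_gibbs hc, Real.exp_add]

lemma mem_interior_integrableExpSet (hκ : 0 < κ) (hφ : ContDiff ℝ 2 φ)
    (hcvx : ∀ y, κ ≤ deriv (deriv φ) y) (σ : ℝ) :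
    σ ∈ interior (ProbabilityTheory.integrableExpSet id (gibbs φ)) := by
  have : ProbabilityTheory.integrableExpSet id (gibbs φ) = Set.univ := by
    refine Set.eq_univ_of_forall fun s => ?_
    simp only [ProbabilityTheory.integrableExpSet, Set.mem_ofPred_eq]
    rw [integrable_gibbs_iff hφ.continuous]
    simpa [Real.exp_add] using integrable_gibbs_weight hκ hφ hcvx s
  simp [this]

lemma analyticAt_logZ (hκ : 0 < κ) (hφ : ContDiff ℝ 2 φ)
    (hcvx : ∀ y, κ ≤ deriv (deriv φ) y) (σ : ℝ) : AnalyticAt ℝ (logZ φ) σ := by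
  rw [logZ_eq_cgf hφ.continuous]
  exact ProbabilityTheory.analyticAt_cgf (mem_interior_integrableExpSet hκ hφ hcvx σ)

/-- The second derivative of `logZ φ` is the variance of the tilted Gibbs measure, which is positive
because that measure is not a point mass. -/
lemma deriv_deriv_logZ_pos (hκ : 0 < κ) (hφ : ContDiff ℝ 2 φ)
    (hcvx : ∀ y, κ ≤ deriv (deriv φ) y) (σ : ℝ) : 0 < deriv (deriv (logZ φ)) σ := by
  have hmem := mem_interior_integrableExpSet hκ hφ hcvx σ
  have hc := hφ.continuous
  have h := ProbabilityTheory.iteratedDeriv_two_cgf_eq_integral hmem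
  rw [iteratedDeriv_succ, iteratedDeriv_one, ← logZ_eq_cgf hc] at h
  rw [h]
  set m := deriv (logZ φ) σ
  have hZ : 0 < ProbabilityTheory.mgf id (gibbs φ) σ := by
    rw [ProbabilityTheory.mgf, integral_gibbs hc]
    simp only [id, ← Real.exp_add]
    exact integral_exp_pos (integrable_gibbs_weight hκ hφ hcvx σ)
  refine div_pos ?_ hZ
  have hint : Integrable (fun y : ℝ => (id y - m) ^ 2 * Real.exp (σ * id y)) (gibbs φ) := by
    have i := fun n => ProbabilityTheory.integrable_pow_mul_exp_of_mem_interior_integrableExpSet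
      hmem n
    refine (((i 2).sub ((i 1).const_mul (2 * m))).add ((i 0).const_mul (m ^ 2))).congr
      (Eventually.of_forall fun y => ?_)
    simp; ring
  rw [integrable_gibbs_iff hc] at hint
  rw [integral_gibbs hc, integral_pos_iff_support_of_nonneg (fun y => by positivity) hint]
  have hsupp : Set.Ioi m ⊆ Function.support
      fun y : ℝ => Real.exp (-φ y) * ((id y - m) ^ 2 * Real.exp (σ * id y)) := by
    intro y hy
    have : y - m ≠ 0 := (sub_pos.2 hy).ne'
    simp [this]
  exact lt_of_lt_of_le (by simp) (measure_mono hsupp)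

lemma convexOn_logZ (hκ : 0 < κ) (hφ : ContDiff ℝ 2 φ)
    (hcvx : ∀ y, κ ≤ deriv (deriv φ) y) : ConvexOn ℝ Set.univ (logZ φ) :=
  convexOn_univ_of_deriv2_nonneg
    (fun σ => (analyticAt_logZ hκ hφ hcvx σ).differentiableAt)
    (fun σ => (analyticAt_logZ hκ hφ hcvx σ).deriv.differentiableAt)
    (fun σ => (deriv_deriv_logZ_pos hκ hφ hcvx σ).le)

/-- Restricting the integral to `[a, a + 1]` bounds `logZ φ` below by a piecewise linear function. -/
lemma exists_le_logZ (hκ : 0 < κ) (hφ : ContDiff ℝ 2 φ)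
    (hcvx : ∀ y, κ ≤ deriv (deriv φ) y) (a : ℝ) :
    ∃ M, ∀ σ, min (σ * a) (σ * (a + 1)) - M ≤ logZ φ σ := by
  obtain ⟨M, hM⟩ := (isCompact_Icc (a := a) (b := a + 1)).bddAbove_image
    hφ.continuous.continuousOn
  refine ⟨M, fun σ => ?_⟩
  have hint := integrable_gibbs_weight hκ hφ hcvx σ
  rw [logZ, Real.le_log_iff_exp_le (integral_exp_pos hint)]
  have h1 : ∀ y ∈ Set.Icc a (a + 1),
      Real.exp (min (σ * a) (σ * (a + 1)) - M) ≤ Real.exp (-φ y + σ * y) := by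
    intro y hy
    have h2 : φ y ≤ M := hM (Set.mem_image_of_mem φ hy)
    have h3 : min (σ * a) (σ * (a + 1)) ≤ σ * y := by
      rcases le_total 0 σ with h | h
      · exact (min_le_left _ _).trans (mul_le_mul_of_nonneg_left hy.1 h)
      · exact (min_le_right _ _).trans (mul_le_mul_of_nonpos_left hy.2 h)
    rw [Real.exp_le_exp]
    linarith
  have h4 := setIntegral_ge_of_const_le_real measurableSet_Icc (by simp) h1 hint.integrableOn
  simp at h4
  exact h4.trans (setIntegral_le_integral hint (Eventually.of_forall fun y => (Real.exp_pos _).le))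

lemma exists_min_logZ_sub (hκ : 0 < κ) (hφ : ContDiff ℝ 2 φ)
    (hcvx : ∀ y, κ ≤ deriv (deriv φ) y) (A : ℝ) :
    ∃ σ₀, ∀ σ, logZ φ σ₀ - σ₀ * A ≤ logZ φ σ - σ * A := by
  obtain ⟨M₁, h₁⟩ := exists_le_logZ hκ hφ hcvx (A + 1)
  obtain ⟨M₂, h₂⟩ := exists_le_logZ hκ hφ hcvx (A - 2)
  have hcont : Continuous fun σ => logZ φ σ - σ * A := by
    have : Continuous (logZ φ) :=
      continuous_iff_continuousAt.2 fun σ => (analyticAt_logZ hκ hφ hcvx σ).continuousAt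
    fun_prop
  refine hcont.exists_forall_le ?_
  refine tendsto_atTop_mono (f := fun σ : ℝ => ‖σ‖ + (-max M₁ M₂)) (fun σ => ?_)
    (tendsto_atTop_add_const_right _ _ tendsto_norm_cocompact_atTop)
  rw [Real.norm_eq_abs]
  rcases le_total 0 σ with h | h
  · have := h₁ σ
    rw [min_eq_left (by nlinarith)] at this
    rw [abs_of_nonneg h]
    linarith [le_max_left M₁ M₂]
  · have := h₂ σ
    rw [min_eq_right (by nlinarith)] at this
    rw [abs_of_nonpos h]
    linarith [le_max_right M₁ M₂]

/-- For a maximizer `σ₀` of `σ A - logZ φ σ`, the Legendre transform of the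
excess `t ↦ (logZ φ (σ₀ + t) - (σ₀ + t) A) - (logZ φ σ₀ - σ₀ A)` is `O(x²)` near `x = 0`.
The case `x = 0` of the bound says that `σ₀` is a maximizer. -/
lemma exists_maximizer (hκ : 0 < κ) (hφ : ContDiff ℝ 2 φ)
    (hcvx : ∀ y, κ ≤ deriv (deriv φ) y) (A : ℝ) :
    ∃ σ₀ K r : ℝ, 0 < K ∧ 0 < r ∧
      ∀ x, |x| ≤ r → ∀ σ,
        (σ - σ₀) * x - ((logZ φ σ - σ * A) - (logZ φ σ₀ - σ₀ * A)) ≤ K * x ^ 2 := by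
  obtain ⟨σ₀, hmin⟩ := exists_min_logZ_sub hκ hφ hcvx A
  have hdiff : ∀ σ, HasDerivAt (logZ φ) (deriv (logZ φ) σ) σ := fun σ =>
    (analyticAt_logZ hκ hφ hcvx σ).differentiableAt.hasDerivAt
  have hdiff2 : ∀ σ, HasDerivAt (deriv (logZ φ)) (deriv (deriv (logZ φ)) σ) σ := fun σ =>
    (analyticAt_logZ hκ hφ hcvx σ).deriv.differentiableAt.hasDerivAt
  have hA : deriv (logZ φ) σ₀ = A := by
    have h1 : HasDerivAt (fun σ => logZ φ σ - σ * A) (deriv (logZ φ) σ₀ - A) σ₀ := by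
      refine ((hdiff σ₀).sub ((hasDerivAt_id σ₀).mul_const A)).congr_deriv ?_
      simp
    have h2 : IsLocalMin (fun σ => logZ φ σ - σ * A) σ₀ := Eventually.of_forall hmin
    linarith [h2.hasDerivAt_eq_zero h1]
  have hpos := deriv_deriv_logZ_pos hκ hφ hcvx σ₀
  set v := deriv (deriv (logZ φ)) σ₀ with hv
  have e1 : ∀ σ, HasDerivAt (fun σ => logZ φ σ - σ * A - v / 4 * (σ - σ₀) ^ 2)
      (deriv (logZ φ) σ - A - v / 2 * (σ - σ₀)) σ := by
    intro σ
    refine (((hdiff σ).sub ((hasDerivAt_id σ).mul_const A)).sub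
      ((((hasDerivAt_id σ).sub_const σ₀).pow 2).const_mul (v / 4))).congr_deriv ?_
    simp; ring
  have e2 : HasDerivAt (fun σ => deriv (logZ φ) σ - A - v / 2 * (σ - σ₀)) (v / 2) σ₀ := by
    refine (((hdiff2 σ₀).sub_const A).sub
      (((hasDerivAt_id σ₀).sub_const σ₀).const_mul (v / 2))).congr_deriv ?_
    rw [← hv]; ring
  -- second derivative test, after removing half of the second-order term
  have hlm : IsLocalMin (fun σ => logZ φ σ - σ * A - v / 4 * (σ - σ₀) ^ 2) σ₀ := by
    refine isLocalMin_of_deriv_deriv_pos ?_ ?_ (e1 σ₀).continuousAt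
    · rw [show deriv (fun σ => logZ φ σ - σ * A - v / 4 * (σ - σ₀) ^ 2) = _ from
        funext fun σ => (e1 σ).deriv, e2.deriv]
      positivity
    · rw [(e1 σ₀).deriv, hA]; ring
  obtain ⟨δ, hδ, hball⟩ := Metric.eventually_nhds_iff_ball.1 hlm
  have hconv : ConvexOn ℝ Set.univ
      (fun t => (logZ φ (σ₀ + t) - (σ₀ + t) * A) - (logZ φ σ₀ - σ₀ * A)) := by
    refine ⟨convex_univ, fun x _ y _ a b ha hb hab => ?_⟩
    have h1 := (convexOn_logZ hκ hφ hcvx).2 (Set.mem_univ (σ₀ + x)) (Set.mem_univ (σ₀ + y))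
      ha hb hab
    simp only [smul_eq_mul] at h1 ⊢
    obtain rfl : b = 1 - a := by linarith
    rw [show a * (σ₀ + x) + (1 - a) * (σ₀ + y) = σ₀ + (a * x + (1 - a) * y) by ring] at h1
    linarith
  refine ⟨σ₀, 1 / (4 * (v / 4)), v / 4 * (δ / 2), by positivity, by positivity,
    fun x hx σ => ?_⟩
  have hloc : ∀ t : ℝ, |t| ≤ δ / 2 →
      v / 4 * t ^ 2 ≤ (logZ φ (σ₀ + t) - (σ₀ + t) * A) - (logZ φ σ₀ - σ₀ * A) := by
    intro t ht
    have := hball (σ₀ + t) (by rw [Metric.mem_ball, Real.dist_eq, add_sub_cancel_left]; linarith)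
    simp only [sub_self, add_sub_cancel_left] at this
    linarith
  have := legendre_le_of_quadratic_growth hconv (by simp) (by positivity : 0 < v / 4)
    (by positivity : 0 < δ / 2) hloc hx (σ - σ₀)
  rw [add_sub_cancel] at this
  rw [one_div_mul_eq_div]
  exact this

end Potential

/-! ### The energies -/

lemma partition_pos {φ : ℝ → ℝ} {κ : ℝ} (hκ : 0 < κ) (hφ : ContDiff ℝ 2 φ)
    (hcvx : ∀ y, κ ≤ deriv (deriv φ) y) (σ : ℝ) :
    0 < ∫ y : ℝ, Real.exp (-φ y + σ * y) :=
  integral_exp_pos (integrable_gibbs_weight hκ hφ hcvx σ)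

/-- The first-order expansion `σ₀ (B - A) ≤ W(B) - W(A) ≤ σ₀ (B - A) + K (B - A)²` identifies the
maximizer `σ₀` with `W'(A)`. -/
lemma W_eq_and_hasDerivAt {ψ : ℝ → ℝ} {A σ₀ K r : ℝ} (hr : 0 < r)
    (hK : ∀ x, |x| ≤ r → ∀ σ,
      (σ - σ₀) * x - ((logZ ψ σ - σ * A) - (logZ ψ σ₀ - σ₀ * A)) ≤ K * x ^ 2) :
    W ψ A = σ₀ * A - logZ ψ σ₀ ∧ HasDerivAt (W ψ) σ₀ A := by
  have hW : ∀ B, W ψ B = ⨆ σ : ℝ, (σ * B - logZ ψ σ) := fun B => rfl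
  have hub : ∀ B, |B - A| ≤ r → ∀ σ,
      σ * B - logZ ψ σ ≤ σ₀ * A - logZ ψ σ₀ + σ₀ * (B - A) + K * (B - A) ^ 2 := by
    intro B hB σ
    linarith [hK (B - A) hB σ]
  have hle : ∀ B, |B - A| ≤ r →
      W ψ B ≤ σ₀ * A - logZ ψ σ₀ + σ₀ * (B - A) + K * (B - A) ^ 2 := fun B hB =>
    (hW B).trans_le (ciSup_le (hub B hB))
  have hge : ∀ B, |B - A| ≤ r → σ₀ * A - logZ ψ σ₀ + σ₀ * (B - A) ≤ W ψ B := by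
    intro B hB
    rw [hW]
    have hbdd : BddAbove (Set.range fun σ : ℝ => σ * B - logZ ψ σ) := by
      exact ⟨_, Set.forall_mem_range.2 (hub B hB)⟩
    linarith [le_ciSup hbdd σ₀]
  have hA0 : |A - A| ≤ r := by simp [hr.le]
  have hWA : W ψ A = σ₀ * A - logZ ψ σ₀ := by
    have h1 := hle A hA0
    have h2 := hge A hA0
    simp only [sub_self] at h1 h2
    nlinarith
  refine ⟨hWA, ?_⟩
  rw [hasDerivAt_iff_isLittleO]
  refine Asymptotics.IsBigO.trans_isLittleO (Asymptotics.IsBigO.of_bound K ?_)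
    (Asymptotics.isLittleO_pow_sub_sub A (m := 2) (by norm_num))
  filter_upwards [Metric.closedBall_mem_nhds A hr] with B hB
  rw [Metric.mem_closedBall, Real.dist_eq] at hB
  have h1 := hle B hB
  have h2 := hge B hB
  simp only [Real.norm_eq_abs, smul_eq_mul, sq_abs, abs_pow]
  rw [hWA, abs_of_nonneg (by linarith)]
  linarith

/-- the limit of `N [W_N^P(A) - W(A)]` with rate `1/N`. -/
theorem limit_of_energy_difference
    (ψ P : ℝ → ℝ) (κ₁ κ₂ ς₁ ς₂ : ℝ)
    (hψ : ContDiff ℝ 2 ψ) (hP : ContDiff ℝ 2 P)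
    (hκ₁ : 0 < κ₁) (hκ : κ₁ ≤ κ₂) (hς₁ : 0 < ς₁) (hς : ς₁ ≤ ς₂)
    (hψ'' : ∀ y : ℝ, κ₁ ≤ deriv (deriv ψ) y ∧ deriv (deriv ψ) y ≤ κ₂)
    (hψP'' : ∀ y : ℝ, ς₁ ≤ deriv (deriv (fun z => ψ z + P z)) y ∧
        deriv (deriv (fun z => ψ z + P z)) y ≤ ς₂)
    (A : ℝ) :
    (∃ C > 0, ∃ N₀ : ℕ, ∀ N : ℕ, N₀ ≤ N →
      |(N : ℝ) * (WNP ψ P N A - W ψ A) +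
        Real.log
          ((∫ y : ℝ, Real.exp (-(ψ y + P y) + deriv (W ψ) A * y)) /
           (∫ y : ℝ, Real.exp (-ψ y + deriv (W ψ) A * y)))| ≤ C / N) ∧
    Tendsto (fun N : ℕ => (N : ℝ) * (WNP ψ P N A - W ψ A)) atTop
      (nhds (- Real.log
        ((∫ y : ℝ, Real.exp (-(ψ y + P y) + deriv (W ψ) A * y)) /
         (∫ y : ℝ, Real.exp (-ψ y + deriv (W ψ) A * y))))) := by
  have hφ : ContDiff ℝ 2 (fun z => ψ z + P z) := hψ.add hP
  obtain ⟨σ₀, K, r, hKpos, hr, hK⟩ := exists_maximizer hκ₁ hψ (fun y => (hψ'' y).1) A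
  obtain ⟨hWA, hderiv⟩ := W_eq_and_hasDerivAt hr hK
  rw [hderiv.deriv, Real.log_div
    (partition_pos hς₁ hφ (fun y => (hψP'' y).1) σ₀).ne'
    (partition_pos hκ₁ hψ (fun y => (hψ'' y).1) σ₀).ne']
  set F := logZ ψ with hF
  set G := logZ (fun z => ψ z + P z) with hG
  change (∃ C > 0, ∃ N₀ : ℕ, ∀ N : ℕ, N₀ ≤ N →
      |(N : ℝ) * (WNP ψ P N A - W ψ A) + (G σ₀ - F σ₀)| ≤ C / N) ∧
    Tendsto (fun N : ℕ => (N : ℝ) * (WNP ψ P N A - W ψ A)) atTop (nhds (-(G σ₀ - F σ₀)))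
  have hGtan : ∀ σ, G σ₀ + deriv G σ₀ * (σ - σ₀) ≤ G σ :=
    (convexOn_logZ hς₁ hφ fun y => (hψP'' y).1).tangent_le
      (analyticAt_logZ hς₁ hφ (fun y => (hψP'' y).1) σ₀).differentiableAt.hasDerivAt
  set b := A - deriv G σ₀ with hb
  have key : ∃ C > 0, ∃ N₀ : ℕ, ∀ N : ℕ, N₀ ≤ N →
      |(N : ℝ) * (WNP ψ P N A - W ψ A) + (G σ₀ - F σ₀)| ≤ C / N := by
    obtain ⟨n₁, hn₁⟩ := exists_nat_ge (|b| / r)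
    refine ⟨2 * K * b ^ 2 + 1, by positivity, n₁ + 2, fun N hN => ?_⟩
    have hN' : (n₁ : ℝ) + 2 ≤ N := by exact_mod_cast hN
    have hn₁0 : (0 : ℝ) ≤ n₁ := n₁.cast_nonneg
    have hN0 : (0 : ℝ) < N := by linarith
    have hM0 : (0 : ℝ) < N - 1 := by linarith
    -- the tilt `b / (N - 1)` is small enough for the quadratic estimate to apply
    have hx : |b / ((N : ℝ) - 1)| ≤ r := by
      rw [abs_div, abs_of_pos hM0, div_le_iff₀ hM0]
      rw [div_le_iff₀ hr] at hn₁
      nlinarith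
    have hub : ∀ σ, σ * A - (N : ℝ)⁻¹ * (G σ + ((N : ℝ) - 1) * F σ) ≤
        W ψ A + (N : ℝ)⁻¹ * (K * b ^ 2 / ((N : ℝ) - 1) - (G σ₀ - F σ₀)) := by
      intro σ
      have h1 := mul_le_mul_of_nonneg_left (hK _ hx σ) hM0.le
      have h2 : ((N : ℝ) - 1) * (K * (b / ((N : ℝ) - 1)) ^ 2) = K * b ^ 2 / ((N : ℝ) - 1) := by
        field_simp
      have h3 : ((N : ℝ) - 1) * ((σ - σ₀) * (b / ((N : ℝ) - 1)) -
          ((F σ - σ * A) - (F σ₀ - σ₀ * A))) =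
          (σ - σ₀) * b - ((N : ℝ) - 1) * ((F σ - σ * A) - (F σ₀ - σ₀ * A)) := by
        field_simp
      rw [h2, h3] at h1
      have h4 : σ * A - (N : ℝ)⁻¹ * (G σ + ((N : ℝ) - 1) * F σ) =
          (N : ℝ)⁻¹ * (N * (σ * A) - (G σ + ((N : ℝ) - 1) * F σ)) := by field_simp
      have h5 : W ψ A + (N : ℝ)⁻¹ * (K * b ^ 2 / ((N : ℝ) - 1) - (G σ₀ - F σ₀)) =
          (N : ℝ)⁻¹ * (N * W ψ A + K * b ^ 2 / ((N : ℝ) - 1) - (G σ₀ - F σ₀)) := by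
        rw [add_sub_assoc, mul_add _ (N * W ψ A), inv_mul_cancel_left₀ hN0.ne']
      rw [h4, h5]
      refine mul_le_mul_of_nonneg_left ?_ (by positivity)
      rw [hWA]
      have h6 := hGtan σ
      rw [hb] at h1
      linarith
    have hWNP : WNP ψ P N A =
        ⨆ σ : ℝ, (σ * A - (N : ℝ)⁻¹ * (G σ + ((N : ℝ) - 1) * F σ)) := rfl
    have hle : WNP ψ P N A ≤
        W ψ A + (N : ℝ)⁻¹ * (K * b ^ 2 / ((N : ℝ) - 1) - (G σ₀ - F σ₀)) :=
      hWNP.trans_le (ciSup_le hub)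
    have hge : σ₀ * A - (N : ℝ)⁻¹ * (G σ₀ + ((N : ℝ) - 1) * F σ₀) ≤ WNP ψ P N A := by
      rw [hWNP]
      refine le_ciSup (f := fun σ : ℝ => σ * A - (N : ℝ)⁻¹ * (G σ + ((N : ℝ) - 1) * F σ)) ?_ σ₀
      exact ⟨_, Set.forall_mem_range.2 hub⟩
    have hle' := mul_le_mul_of_nonneg_left hle hN0.le
    have hge' := mul_le_mul_of_nonneg_left hge hN0.le
    rw [mul_add, mul_inv_cancel_left₀ hN0.ne'] at hle'
    rw [mul_sub, mul_inv_cancel_left₀ hN0.ne'] at hge'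
    have hlow : 0 ≤ (N : ℝ) * (WNP ψ P N A - W ψ A) + (G σ₀ - F σ₀) := by
      rw [mul_sub]
      rw [hWA]
      linarith
    rw [abs_of_nonneg hlow]
    have hfin : K * b ^ 2 / ((N : ℝ) - 1) ≤ (2 * K * b ^ 2 + 1) / N := by
      rw [div_le_div_iff₀ hM0 hN0]
      have : 0 ≤ K * b ^ 2 := by positivity
      nlinarith
    linarith
  refine ⟨key, ?_⟩
  obtain ⟨C, -, N₀, hC⟩ := key
  rw [tendsto_iff_dist_tendsto_zero]
  refine squeeze_zero' (Eventually.of_forall fun N => dist_nonneg) ?_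
    (tendsto_const_div_atTop_nhds_zero_nat C)
  filter_upwards [eventually_ge_atTop N₀] with N hN
  rw [Real.dist_eq, sub_neg_eq_add]
  exact hC N hN
end
end
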